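/- Let P be a finite pure weighted graded poset of rank d possessing Property UL with constants (c^xyz_l, c^dia_l, c^sqr_l) and c^dia_l > 0. Then for all α, β ∈ ℝ, every 0 ≤ l ≤ d−1, and all f, g ∈ C^l: c^dia_l·⟨U_l f, U_l g⟩ = β(1−α)·⟨D_l f, D_l g⟩ + (α − c^sqr_l·(c^xyz_l − c^dia_l))·⟨f,g⟩ + Σ_{x∈P(l−1)} m(x)·⟨f_x, (M^+_{x,0} − α·Id)(Id − β·M^−_{x,0}) g_x⟩_x. -/

import Mathlib

open Finset

attribute [local instance] Classical.propDecidable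

noncomputable section

/-- A finite pure weighted graded poset of rank `d`, presented as a rank function
and a weight scheme on a finite partial order `P`. -/
structure WGP (P : Type) [Fintype P] [PartialOrder P] where
  /-- the rank of the poset -/
  d : ℤ
  /-- the rank function -/
  rk : P → ℤ
  rk_mono : Monotone rk
  rk_lb : ∀ x, -1 ≤ rk x
  rk_ub : ∀ x, rk x ≤ d
  rk_covBy : ∀ a b : P, a ⋖ b → rk b = rk a + 1
  bot_unique : ∃! x : P, rk x = -1
  isPure : ∀ x : P, ∃ y : P, rk y = d ∧ x ≤ y
  /-- the weight function -/
  m : P → ℝ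
  m_pos : ∀ x, 0 < m x
  /-- the transition probabilities: `p y x` is `p_{y → x}` -/
  p : P → P → ℝ
  p_nonneg : ∀ y x, 0 ≤ p y x
  p_pos_iff : ∀ y x, 0 < p y x ↔ x ⋖ y
  p_sum : ∀ y, 0 ≤ rk y → ∑ x ∈ univ.filter (fun x => x ⋖ y), p y x = 1
  m_eq : ∀ x, rk x < d → m x = ∑ y ∈ univ.filter (fun y => x ⋖ y), p y x * m y
  m_bot : ∀ x, rk x = -1 → m x = 1

/-- `T` has at most `n` eigenvalues greater than `c`, counted with
(geometric) multiplicity. -/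
def eigMultAboveLe {V : Type*} [AddCommGroup V] [Module ℝ V]
    (T : Module.End ℝ V) (c : ℝ) (n : ℕ) : Prop :=
  ∀ s : Finset ℝ, (∀ μ ∈ s, c < μ) →
    ∑ μ ∈ s, Module.finrank ℝ (T.eigenspace μ) ≤ n

/-- `μ` is the second largest eigenvalue of `T`, counted with multiplicity. -/
def IsSecondLargestEig {V : Type*} [AddCommGroup V] [Module ℝ V]
    (T : Module.End ℝ V) (μ : ℝ) : Prop :=
  T.HasEigenvalue μ ∧ eigMultAboveLe T μ 1 ∧
    ∃ s : Finset ℝ, (∀ ν ∈ s, μ ≤ ν) ∧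
      2 ≤ ∑ ν ∈ s, Module.finrank ℝ (T.eigenspace ν)

/-- `ν` is the least eigenvalue of `T`. -/
def IsLeastEig {V : Type*} [AddCommGroup V] [Module ℝ V]
    (T : Module.End ℝ V) (ν : ℝ) : Prop :=
  T.HasEigenvalue ν ∧ ∀ c : ℝ, T.HasEigenvalue c → ν ≤ c

/-- `λ(T) ≤ lam`, i.e. the second largest eigenvalue of `T` (with multiplicity)
is at most `lam` and the least eigenvalue is at least `-lam`. -/
def lamBd {V : Type*} [AddCommGroup V] [Module ℝ V]
    (T : Module.End ℝ V) (lam : ℝ) : Prop :=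
  eigMultAboveLe T lam 1 ∧ ∀ c : ℝ, T.HasEigenvalue c → -lam ≤ c

namespace WGP

variable {P : Type} [Fintype P] [PartialOrder P] (W : WGP P)

/-- The level set `P(i)`. -/
def lvl (i : ℤ) : Finset P := univ.filter (fun x => W.rk x = i)

/-- The weighted inner product on `C^i`. -/
def innerAt (i : ℤ) (f g : P → ℝ) : ℝ := ∑ x ∈ W.lvl i, W.m x * f x * g x

/-- The squared norm on `C^i`. -/
def normSqAt (i : ℤ) (f : P → ℝ) : ℝ := W.innerAt i f f

/-- The norm on `C^i`. -/
def normAt (i : ℤ) (f : P → ℝ) : ℝ := Real.sqrt (W.normSqAt i f)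

/-- The matrix of transition probabilities : entry `(y, x)` is `p_{y→x}`,
which vanishes unless `x ⋖ y`.  This is also the matrix of the up operator. -/
def upMat : Matrix P P ℝ := Matrix.of fun y x => W.p y x

/-- The matrix of the down operator. -/
def downMat : Matrix P P ℝ := Matrix.of fun x y => W.p y x * W.m y / W.m x

/-- The up operator `U`. -/
def Up (f : P → ℝ) : P → ℝ := W.upMat.mulVec f

/-- The down operator `D`. -/
def Down (f : P → ℝ) : P → ℝ := W.downMat.mulVec f

/-- `chSum x y = Σ_{c ∈ Ch(y→x)} p(c)`, the total `p`-weight of maximal chains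
from `x` up to `y` (the entry of the corresponding power of the transition
matrix). -/
def chSum (x y : P) : ℝ := (W.upMat ^ (W.rk y - W.rk x).toNat) y x

/-- The induced weight function of the link `P_x`. -/
def mL (x y : P) : ℝ := W.m y / W.m x * W.chSum x y

/-- The induced transition probabilities of the link `P_x` :
`pL x z y = (p_x)_{z → y}`. -/
def pL (x z y : P) : ℝ := W.p z y * W.chSum x y / W.chSum x z

/-- The level set `P_x(j)` of the link of `x`. -/
def linkLvl (x : P) (j : ℤ) : Finset P :=
  univ.filter (fun y => x ≤ y ∧ W.rk y = W.rk x + 1 + j)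

/-- The inner product of the link `P_x` at link-level `j`. -/
def innerL (x : P) (j : ℤ) (f g : P → ℝ) : ℝ :=
  ∑ y ∈ W.linkLvl x j, W.mL x y * f y * g y

/-- The matrix of the up operator of the link `P_x`. -/
def upMatL (x : P) : Matrix P P ℝ :=
  Matrix.of fun z y => if y ⋖ z ∧ x ≤ y then W.pL x z y else 0

/-- The matrix of the down operator of the link `P_x`. -/
def downMatL (x : P) : Matrix P P ℝ :=
  Matrix.of fun y z => if y ⋖ z then W.pL x z y * W.mL x z / W.mL x y else 0

/-- The up operator of the link `P_x`. -/
def UpL (x : P) (f : P → ℝ) : P → ℝ := (W.upMatL x).mulVec f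

/-- The down operator of the link `P_x`. -/
def DownL (x : P) (f : P → ℝ) : P → ℝ := (W.downMatL x).mulVec f

/-- The up-down walk `M^+_{x,0}` of the link `P_x`. -/
def MplusL (x : P) (f : P → ℝ) : P → ℝ := W.DownL x (W.UpL x f)

/-- The down-up walk `M^-_{x,0}` of the link `P_x`. -/
def MminusL (x : P) (f : P → ℝ) : P → ℝ := W.UpL x (W.DownL x f)

/-- The adjacency matrix. -/
def adjMat : Matrix P P ℝ := Matrix.of fun y x =>
  if x = y then 0 else
    ∑ z ∈ univ.filter (fun z => x ⋖ z ∧ y ⋖ z),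
      W.m z * W.p z x * W.p z y / ((1 - W.p z y) * W.m y)

/-- The adjacency operator. -/
def Adj (f : P → ℝ) : P → ℝ := W.adjMat.mulVec f

/-- The adjacency matrix of the link `P_x`. -/
def adjMatL (x : P) : Matrix P P ℝ := Matrix.of fun y w =>
  if w = y then 0 else
    ∑ z ∈ univ.filter (fun z => w ⋖ z ∧ y ⋖ z),
      W.mL x z * W.pL x z w * W.pL x z y / ((1 - W.pL x z y) * W.mL x y)

/-- The adjacency operator of the link `P_x`. -/
def AdjL (x : P) (f : P → ℝ) : P → ℝ := (W.adjMatL x).mulVec f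

/-- The up-down walk `M^+_l` as an endomorphism of `C^l`. -/
def MplusEnd (l : ℤ) : Module.End ℝ ({x : P // W.rk x = l} → ℝ) :=
  ((W.downMat * W.upMat).submatrix Subtype.val Subtype.val).mulVecLin

/-- The up-down walk `M^+_{x,0}` as an endomorphism of `C^0(P_x)`. -/
def MplusEndL (x : P) : Module.End ℝ ({y : P // x ⋖ y} → ℝ) :=
  ((W.downMatL x * W.upMatL x).submatrix Subtype.val Subtype.val).mulVecLin

/-- The adjacency operator `A_x` of the link `P_x` as an endomorphism of
`C^0(P_x)`. -/
def AdjEndL (x : P) : Module.End ℝ ({y : P // x ⋖ y} → ℝ) :=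
  ((W.adjMatL x).submatrix Subtype.val Subtype.val).mulVecLin

/-- A standard weight scheme. -/
def Standard : Prop :=
  ∀ y x : P, x ⋖ y → W.p y x = 1 / ((univ.filter (fun z => z ⋖ y)).card : ℝ)

/-- `P` is lower regular at level `i` with constant `N`. -/
def LowerRegAt (i : ℤ) (N : ℕ) : Prop :=
  ∀ y : P, W.rk y = i → (univ.filter (fun z => z ⋖ y)).card = N

/-- `P` is middle regular at level `i` with constant `N`. -/
def MiddleRegAt (i : ℤ) (N : ℕ) : Prop :=
  ∀ x z : P, W.rk x = i + 1 → W.rk z = i - 1 → z < x →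
    (univ.filter (fun y => z ⋖ y ∧ y ⋖ x)).card = N

/-- `P` is `∨∧`-regular at level `i` with constant `N`. -/
def WedgeRegAt (i : ℤ) (N : ℕ) : Prop :=
  ∀ y₁ y₂ : P, W.rk y₁ = i → W.rk y₂ = i → y₁ ≠ y₂ → (∃ z, y₁ ⋖ z ∧ y₂ ⋖ z) →
    (univ.filter (fun s => s ⋖ y₁ ∧ s ⋖ y₂)).card = N

/-- `P` is `⅄`-regular with constant `R`. -/
def WyeReg (R : ℕ) : Prop :=
  ∀ u y₁ y₂ : P, W.rk u = 2 → W.rk y₁ = 0 → W.rk y₂ = 0 → y₁ ≠ y₂ →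
    y₁ < u → y₂ < u →
    (univ.filter (fun z => y₁ ⋖ z ∧ y₂ ⋖ z ∧ z ⋖ u)).card = R

/-- Property UL.1 with constants `c`. -/
def UL1 (c : ℤ → ℝ) : Prop :=
  ∀ l : ℤ, 0 ≤ l → l < W.d → ∀ y : P, W.rk y = l → ∀ x : P, y ⋖ x →
    ∑ z ∈ univ.filter (fun z => z ⋖ y), W.p y z ^ 2 / W.chSum z x = c l

/-- Property UL.2 with constants `c`. -/
def UL2 (c : ℤ → ℝ) : Prop :=
  ∀ l : ℤ, 0 ≤ l → l < W.d → ∀ y₁ y₂ : P, W.rk y₁ = l → W.rk y₂ = l → y₁ ≠ y₂ →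
    ∀ x : P, y₁ ⋖ x → y₂ ⋖ x →
    ∑ z ∈ univ.filter (fun z => z ⋖ y₁ ∧ z ⋖ y₂),
      W.p y₁ z * W.p y₂ z / W.chSum z x = c l

/-- Property UL.3 with constants `c`. -/
def UL3 (c : ℤ → ℝ) : Prop :=
  ∀ l : ℤ, 0 ≤ l → l < W.d → ∀ y : P, W.rk y = l →
    ∑ x ∈ univ.filter (fun x => y ⋖ x), W.m x * W.p x y ^ 2 = c l * W.m y

/-- Property AL. -/
def AL : Prop :=
  ∀ l : ℤ, 0 ≤ l → l ≤ W.d - 1 → ∀ x y : P, W.rk x = l → W.rk y = l → x ≠ y →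
    ∑ z ∈ univ.filter (fun z => x ⋖ z ∧ y ⋖ z),
        W.m z * W.p z x * W.p z y / (1 - W.p z x)
    = ∑ z ∈ univ.filter (fun z => x ⋖ z ∧ y ⋖ z),
        W.m z * W.p z x * W.p z y *
          ∑ s ∈ univ.filter (fun s => s ⋖ x ∧ s ⋖ y),
            W.p x s * W.p y s / (W.chSum s z - W.p z x * W.p x s)

/-- Equation TL.1 with constant `c`. -/
def TL1 (c : ℝ) : Prop :=
  ∀ y : P, W.rk y = 0 →
    c * W.m y = ∑ z ∈ univ.filter (fun z => y ⋖ z), W.m z * W.p z y ^ 2 *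
      ∑ x ∈ univ.filter (fun x => x ⋖ z ∧ x ≠ y), W.p z x / (1 - W.p z x) ^ 2

/-- Equation TL.2 with constant `c`. -/
def TL2 (c : ℝ) : Prop :=
  ∀ y₁ y₂ : P, W.rk y₁ = 0 → W.rk y₂ = 0 → y₁ ≠ y₂ →
    c * ∑ z ∈ univ.filter (fun z => y₁ ⋖ z ∧ y₂ ⋖ z),
          W.m z * W.p z y₁ * W.p z y₂ / (1 - W.p z y₁)
    = ∑ z ∈ univ.filter (fun z => y₁ ⋖ z ∧ y₂ ⋖ z),
        W.m z * W.p z y₁ * W.p z y₂ *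
          ∑ x ∈ univ.filter (fun x => x ⋖ z ∧ x ≠ y₁ ∧ x ≠ y₂),
            W.p z x / (1 - W.p z x) ^ 2

/-- Equation TL.3 with constant `c`. -/
def TL3 (c : ℝ) : Prop :=
  ∀ y : P, W.rk y = 0 →
    c * W.m y =
      ∑ x ∈ univ.filter (fun x => W.rk x = 0 ∧ x ≠ y),
        ∑ z ∈ univ.filter (fun z => x ⋖ z ∧ y ⋖ z),
          ∑ w ∈ univ.filter (fun w => w ≠ z ∧ x ⋖ w ∧ y ⋖ w),
            ∑ u ∈ univ.filter (fun u => z ⋖ u ∧ w ⋖ u),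
              W.m u * W.p u z * W.p u w * W.p w y * W.p z y * W.p w x * W.p z x /
                (W.chSum x u * (1 - W.p u z * W.p z x / W.chSum x u) *
                  (1 - W.p w x) * (1 - W.p z x))

/-- Equation TL.4 with constant `c`. -/
def TL4 (c : ℝ) : Prop :=
  ∀ y₁ y₂ : P, W.rk y₁ = 0 → W.rk y₂ = 0 → y₁ ≠ y₂ →
    c * ∑ z ∈ univ.filter (fun z => y₁ ⋖ z ∧ y₂ ⋖ z),
          W.m z * W.p z y₁ * W.p z y₂ / (1 - W.p z y₁)
    = ∑ x ∈ univ.filter (fun x => W.rk x = 0 ∧ x ≠ y₁ ∧ x ≠ y₂),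
        ∑ z ∈ univ.filter (fun z => x ⋖ z ∧ y₂ ⋖ z),
          ∑ w ∈ univ.filter (fun w => w ≠ z ∧ x ⋖ w ∧ y₁ ⋖ w),
            ∑ u ∈ univ.filter (fun u => z ⋖ u ∧ w ⋖ u),
              W.m u * W.p u z * W.p u w * W.p w y₁ * W.p z y₂ * W.p w x * W.p z x /
                (W.chSum x u * (1 - W.p u z * W.p z x / W.chSum x u) *
                  (1 - W.p w x) * (1 - W.p z x))

/-- The induced function `f̂_x ∈ C^0(P_x)` of `f ∈ C^0`. -/
def hatF (x : P) (f : P → ℝ) : P → ℝ := fun z =>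
  (1 / (1 - W.p z x)) * ∑ y ∈ univ.filter (fun y => y ≠ x ∧ y ⋖ z), W.p z y * f y

/-- `P` is connected: the Markov chain `M^+_0` on `P(0)` is irreducible. -/
def Connected : Prop :=
  ∀ y z : P, W.rk y = 0 → W.rk z = 0 →
    ∃ j : ℕ, 0 < j ∧ ((W.downMat * W.upMat) ^ j) z y ≠ 0

/-- The link `P_x` is connected: the Markov chain `M^+_{x,0}` on `P_x(0)` is
irreducible. -/
def LinkConnected (x : P) : Prop :=
  ∀ y z : P, x ⋖ y → x ⋖ z →
    ∃ j : ℕ, 0 < j ∧ ((W.downMatL x * W.upMatL x) ^ j) z y ≠ 0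

/-- `c` is a nontrivial eigenvalue of the adjacency operator `A` of `P`,
i.e. one with an eigenvector orthogonal to the constants. -/
def IsNontrivEigAdj (c : ℝ) : Prop :=
  ∃ f : P → ℝ, (∃ y, W.rk y = 0 ∧ f y ≠ 0) ∧
    (∀ y, W.rk y = 0 → W.Adj f y = c * f y) ∧
    W.innerAt 0 f (fun _ => 1) = 0

/-- `c` is a nontrivial eigenvalue of the adjacency operator `A_x` of the
link `P_x`. -/
def IsNontrivEigAdjL (x : P) (c : ℝ) : Prop :=
  ∃ f : P → ℝ, (∃ y, x ⋖ y ∧ f y ≠ 0) ∧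
    (∀ y, x ⋖ y → W.AdjL x f y = c * f y) ∧
    W.innerL x 0 f (fun _ => 1) = 0

end WGP

/-!
On a link `P_x` the down operator is the restriction of the global one, and the link weights
`m(x) m_x(y) = m(y) Σ_{c ∈ Ch(y→x)} p(c)` disintegrate `m` along the chains through `P(i)`. Hence
`⟨f, g⟩` is the sum of its localizations, and `Σ_x m(x) ⟨U_x f_x, U_x g_x⟩_x` is a quadratic form
in `f` and `g` whose kernel at two elements `y, w` below `z` measures how much the chains from `y`
and from `w` down to `P(l - 1)` overlap. Property UL says that this kernel takes one value off the
diagonal and another on it, so the form is `c^dia ⟨Uf, Ug⟩` plus a multiple of `⟨f, g⟩`.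
The operator `M⁻_{x,0}` projects onto the constants, which `M⁺_{x,0}` fixes; expanding
`(M⁺ - α)(1 - β M⁻)` therefore produces only this form, `⟨f, g⟩` and `⟨Df, Dg⟩`.
-/

namespace WGP

variable {P : Type} [Fintype P] [PartialOrder P] (W : WGP P)

section Levels

variable {W} in
lemma mem_lvl {i : ℤ} {x : P} : x ∈ W.lvl i ↔ W.rk x = i := by
  simp only [lvl, mem_filter, mem_univ, true_and]

lemma p_eq_zero_of_not_covBy {x y : P} (h : ¬x ⋖ y) : W.p y x = 0 :=
  le_antisymm (not_lt.1 (mt (W.p_pos_iff y x).1 h)) (W.p_nonneg y x)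

lemma rk_strictMono : StrictMono W.rk := by
  intro x y hxy
  obtain ⟨c, hxc, hcy⟩ := exists_covBy_le_of_lt hxy
  have := W.rk_covBy x c hxc
  have := W.rk_mono hcy
  omega

lemma covBy_of_le_of_rk_eq {x y : P} (hxy : x ≤ y) (hrk : W.rk y = W.rk x + 1) : x ⋖ y := by
  refine ⟨hxy.lt_of_ne (by rintro rfl; omega), fun w hxw hwy ↦ ?_⟩
  linarith [Int.add_one_le_of_lt (W.rk_strictMono hxw), W.rk_strictMono hwy]

lemma sum_p {y : P} (hy : 0 ≤ W.rk y) : ∑ x, W.p y x = 1 := by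
  rw [← W.p_sum y hy]
  refine (sum_subset (subset_univ _) fun x _ hx ↦ W.p_eq_zero_of_not_covBy fun h ↦ hx ?_).symm
  simpa using h

lemma sum_p_mul_m {y : P} (hy : W.rk y < W.d) : ∑ z, W.p z y * W.m z = W.m y := by
  rw [W.m_eq y hy]
  refine (sum_subset (subset_univ _) fun z _ hz ↦ ?_).symm
  rw [W.p_eq_zero_of_not_covBy (by simpa using hz), zero_mul]

lemma sum_lvl_sum_p_comm (i : ℤ) (F : P → P → ℝ) :
    ∑ y ∈ W.lvl i, ∑ z, W.p z y * F y z = ∑ z ∈ W.lvl (i + 1), ∑ y, W.p z y * F y z := by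
  have p_eq_zero {y z : P} (h : W.rk z ≠ W.rk y + 1) : W.p z y = 0 :=
    W.p_eq_zero_of_not_covBy (mt (W.rk_covBy y z) h)
  calc ∑ y ∈ W.lvl i, ∑ z, W.p z y * F y z
      = ∑ y ∈ W.lvl i, ∑ z ∈ W.lvl (i + 1), W.p z y * F y z := by
        refine sum_congr rfl fun y hy ↦ (sum_subset (subset_univ _) fun z _ hz ↦ ?_).symm
        rw [mem_lvl] at hy hz
        rw [p_eq_zero (by omega), zero_mul]
    _ = ∑ z ∈ W.lvl (i + 1), ∑ y ∈ W.lvl i, W.p z y * F y z := sum_comm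
    _ = ∑ z ∈ W.lvl (i + 1), ∑ y, W.p z y * F y z := by
        refine sum_congr rfl fun z hz ↦ sum_subset (subset_univ _) fun y _ hy ↦ ?_
        rw [mem_lvl] at hy hz
        rw [p_eq_zero (by omega), zero_mul]

lemma up_apply (f : P → ℝ) (z : P) : W.Up f z = ∑ y, W.p z y * f y := rfl

lemma m_mul_down (f : P → ℝ) (y : P) : W.m y * W.Down f y = ∑ z, W.p z y * (W.m z * f z) := by
  have := (W.m_pos y).ne'
  simp only [Down, Matrix.mulVec, dotProduct, downMat, Matrix.of_apply, mul_sum]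
  exact sum_congr rfl fun z _ ↦ by field_simp

lemma down_eq_of_forall_eq {y : P} (hy : W.rk y < W.d) {f : P → ℝ} {c : ℝ}
    (hf : ∀ z, y ⋖ z → f z = c) : W.Down f y = c := by
  refine mul_left_cancel₀ (W.m_pos y).ne' ?_
  rw [m_mul_down, ← W.sum_p_mul_m hy, sum_mul]
  refine sum_congr rfl fun z _ ↦ ?_
  by_cases hyz : y ⋖ z
  · rw [hf z hyz, mul_assoc]
  · simp [W.p_eq_zero_of_not_covBy hyz]

end Levels

section ChainSums

lemma chSum_of_rk_le {x z : P} (h : W.rk z ≤ W.rk x) :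
    W.chSum x z = if z = x then 1 else 0 := by
  rw [chSum, Int.toNat_eq_zero.2 (by omega), pow_zero, Matrix.one_apply]

lemma chSum_of_rk_eq_add_one {x z : P} (h : W.rk z = W.rk x + 1) : W.chSum x z = W.p z x := by
  rw [chSum, show (W.rk z - W.rk x).toNat = 1 by omega, pow_one, upMat, Matrix.of_apply]

lemma chSum_self (x : P) : W.chSum x x = 1 := by
  rw [W.chSum_of_rk_le le_rfl, if_pos rfl]

lemma chSum_of_rk_lt {x z : P} (h : W.rk x < W.rk z) :
    W.chSum x z = ∑ y, W.p z y * W.chSum x y := by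
  obtain ⟨n, hn⟩ : ∃ n : ℕ, W.rk z - W.rk x = n + 1 := ⟨(W.rk z - W.rk x - 1).toNat, by omega⟩
  rw [chSum, hn, Int.toNat_natCast_add_one, pow_succ', Matrix.mul_apply]
  refine sum_congr rfl fun y _ ↦ ?_
  by_cases hyz : y ⋖ z
  · have := W.rk_covBy y z hyz
    rw [chSum, show (W.rk y - W.rk x).toNat = n by omega, upMat, Matrix.of_apply]
  · simp [upMat, W.p_eq_zero_of_not_covBy hyz]

lemma chSum_nonneg (x z : P) : 0 ≤ W.chSum x z := by
  induction z using WellFoundedLT.induction with | ind z ih => ?_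
  rcases lt_or_ge (W.rk x) (W.rk z) with h | h
  · rw [W.chSum_of_rk_lt h]
    refine sum_nonneg fun y _ ↦ ?_
    by_cases hyz : y ⋖ z
    · exact mul_nonneg (W.p_nonneg z y) (ih y hyz.lt)
    · rw [W.p_eq_zero_of_not_covBy hyz, zero_mul]
  · rw [W.chSum_of_rk_le h]
    split_ifs <;> norm_num

lemma chSum_pos {x z : P} (h : x ≤ z) : 0 < W.chSum x z := by
  induction z using WellFoundedLT.induction with | ind z ih => ?_
  rcases h.eq_or_lt with rfl | hlt
  · rw [chSum_self]
    exact one_pos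
  · obtain ⟨y, hxy, hyz⟩ := exists_le_covBy_of_lt hlt
    rw [W.chSum_of_rk_lt (W.rk_strictMono hlt)]
    exact sum_pos' (fun w _ ↦ mul_nonneg (W.p_nonneg z w) (W.chSum_nonneg x w))
      ⟨y, mem_univ y, mul_pos ((W.p_pos_iff z y).2 hyz) (ih y hyz.lt hxy)⟩

lemma chSum_eq_zero_of_not_le {x z : P} (h : ¬x ≤ z) : W.chSum x z = 0 := by
  induction z using WellFoundedLT.induction with | ind z ih => ?_
  rcases lt_or_ge (W.rk x) (W.rk z) with hlt | hge
  · rw [W.chSum_of_rk_lt hlt]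
    refine sum_eq_zero fun y _ ↦ ?_
    by_cases hyz : y ⋖ z
    · rw [ih y hyz.lt fun hxy ↦ h (hxy.trans hyz.le), mul_zero]
    · rw [W.p_eq_zero_of_not_covBy hyz, zero_mul]
  · rw [W.chSum_of_rk_le hge, if_neg fun hzx ↦ h hzx.ge]

lemma sum_lvl_chSum {i : ℤ} (hi : -1 ≤ i) {z : P} (hz : i ≤ W.rk z) :
    ∑ x ∈ W.lvl i, W.chSum x z = 1 := by
  induction z using WellFoundedLT.induction with | ind z ih => ?_
  rcases hz.eq_or_lt with rfl | hlt
  · have hx : ∀ x ∈ W.lvl (W.rk z), W.chSum x z = if z = x then 1 else 0 :=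
      fun x hx ↦ W.chSum_of_rk_le (mem_lvl.1 hx).ge
    rw [sum_congr rfl hx, sum_ite_eq, if_pos (mem_lvl.2 rfl)]
  · calc ∑ x ∈ W.lvl i, W.chSum x z
        = ∑ x ∈ W.lvl i, ∑ y, W.p z y * W.chSum x y :=
          sum_congr rfl fun x hx ↦ W.chSum_of_rk_lt (by rwa [mem_lvl.1 hx])
      _ = ∑ y, W.p z y * ∑ x ∈ W.lvl i, W.chSum x y := by
          simp only [mul_sum]
          exact sum_comm
      _ = ∑ y, W.p z y := by
          refine sum_congr rfl fun y _ ↦ ?_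
          by_cases hyz : y ⋖ z
          · have := W.rk_covBy y z hyz
            rw [ih y hyz.lt (by omega), mul_one]
          · rw [W.p_eq_zero_of_not_covBy hyz, zero_mul]
      _ = 1 := W.sum_p (by omega)

end ChainSums

section Links

lemma m_mul_innerL (x : P) (j : ℤ) (f g : P → ℝ) :
    W.m x * W.innerL x j f g =
      ∑ y ∈ W.lvl (W.rk x + 1 + j), W.chSum x y * (W.m y * f y * g y) := by
  have hx := (W.m_pos x).ne'
  have hsub : W.linkLvl x j ⊆ W.lvl (W.rk x + 1 + j) := fun y hy ↦
    mem_lvl.2 (mem_filter.1 hy).2.2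
  rw [innerL, mul_sum, ← sum_subset hsub]
  · refine sum_congr rfl fun y _ ↦ ?_
    rw [mL]
    field_simp
  · intro y hy hyx
    have hxy : ¬x ≤ y := fun hxy ↦ hyx (by simp [linkLvl, hxy, mem_lvl.1 hy])
    rw [W.chSum_eq_zero_of_not_le hxy, zero_mul]

lemma sum_lvl_m_mul_innerL {i j : ℤ} (hi : -1 ≤ i) (hj : -1 ≤ j) (f g : P → ℝ) :
    ∑ x ∈ W.lvl i, W.m x * W.innerL x j f g = W.innerAt (i + 1 + j) f g := by
  calc ∑ x ∈ W.lvl i, W.m x * W.innerL x j f g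
      = ∑ x ∈ W.lvl i, ∑ y ∈ W.lvl (i + 1 + j), W.chSum x y * (W.m y * f y * g y) :=
        sum_congr rfl fun x hx ↦ by rw [m_mul_innerL, mem_lvl.1 hx]
    _ = ∑ y ∈ W.lvl (i + 1 + j), (∑ x ∈ W.lvl i, W.chSum x y) * (W.m y * f y * g y) := by
        simp only [sum_mul]
        exact sum_comm
    _ = W.innerAt (i + 1 + j) f g :=
        sum_congr rfl fun y hy ↦ by
          rw [W.sum_lvl_chSum hi (by rw [mem_lvl.1 hy]; omega), one_mul]

lemma innerL_neg_one (x : P) (f g : P → ℝ) : W.innerL x (-1) f g = f x * g x := by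
  have hlink : W.linkLvl x (-1) = {x} := by
    ext y
    simp only [linkLvl, mem_filter, mem_univ, true_and, mem_singleton]
    refine ⟨fun ⟨hxy, hrk⟩ ↦ ?_, fun h ↦ by simp [h]⟩
    by_contra hne
    linarith [W.rk_strictMono (lt_of_le_of_ne' hxy hne), hrk]
  rw [innerL, hlink, sum_singleton, mL, chSum_self, div_self (W.m_pos x).ne', one_mul, one_mul]

lemma downL_eq_down {x y : P} (hxy : x ≤ y) (f : P → ℝ) : W.DownL x f y = W.Down f y := by
  refine sum_congr rfl fun z _ ↦ ?_
  simp only [downMatL, downMat, Matrix.of_apply]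
  split_ifs with hyz
  · have := (W.m_pos x).ne'
    have := (W.m_pos y).ne'
    have := (W.chSum_pos hxy).ne'
    have := (W.chSum_pos (hxy.trans hyz.le)).ne'
    rw [pL, mL, mL]
    field_simp
  · simp [W.p_eq_zero_of_not_covBy hyz]

lemma chSum_mul_upL (x z : P) (f : P → ℝ) :
    W.chSum x z * W.UpL x f z = ∑ y, W.p z y * (W.chSum x y * f y) := by
  rw [UpL, Matrix.mulVec, dotProduct, mul_sum]
  refine sum_congr rfl fun y _ ↦ ?_
  simp only [upMatL, Matrix.of_apply]
  split_ifs with h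
  · have := (W.chSum_pos (h.2.trans h.1.le)).ne'
    rw [pL]
    field_simp
  · rcases not_and_or.1 h with hyz | hxy
    · simp [W.p_eq_zero_of_not_covBy hyz]
    · simp [W.chSum_eq_zero_of_not_le hxy]

lemma upL_eq_of_forall_eq {x z : P} (hxz : x < z) {f : P → ℝ} {c : ℝ}
    (hf : ∀ y, x ≤ y → y ⋖ z → f y = c) : W.UpL x f z = c := by
  refine mul_left_cancel₀ (W.chSum_pos hxz.le).ne' ?_
  rw [chSum_mul_upL, W.chSum_of_rk_lt (W.rk_strictMono hxz), sum_mul]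
  refine sum_congr rfl fun y _ ↦ ?_
  by_cases hyz : y ⋖ z
  · by_cases hxy : x ≤ y
    · rw [hf y hxy hyz, mul_assoc]
    · simp [W.chSum_eq_zero_of_not_le hxy]
  · simp [W.p_eq_zero_of_not_covBy hyz]

lemma innerL_downL (x : P) (j : ℤ) (f g : P → ℝ) :
    W.innerL x j f (W.DownL x g) = W.innerL x (j + 1) (W.UpL x f) g := by
  refine mul_left_cancel₀ (W.m_pos x).ne' ?_
  let F (y z : P) : ℝ := W.chSum x y * f y * (W.m z * g z)
  have down_term (y : P) :
      W.chSum x y * (W.m y * f y * W.DownL x g y) = ∑ z, W.p z y * F y z := by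
    by_cases hxy : x ≤ y
    · calc W.chSum x y * (W.m y * f y * W.DownL x g y)
          = W.chSum x y * f y * (W.m y * W.Down g y) := by rw [W.downL_eq_down hxy]; ring
        _ = ∑ z, W.p z y * F y z := by
          rw [m_mul_down, mul_sum]
          exact sum_congr rfl fun z _ ↦ mul_left_comm _ _ _
    · simp [F, W.chSum_eq_zero_of_not_le hxy]
  have up_term (z : P) :
      W.chSum x z * (W.m z * W.UpL x f z * g z) = ∑ y, W.p z y * F y z := by
    calc W.chSum x z * (W.m z * W.UpL x f z * g z)
        = W.chSum x z * W.UpL x f z * (W.m z * g z) := by ring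
      _ = ∑ y, W.p z y * F y z := by
        rw [chSum_mul_upL, sum_mul]
        exact sum_congr rfl fun y _ ↦ mul_assoc _ _ _
  simp only [m_mul_innerL, down_term, up_term, sum_lvl_sum_p_comm, add_assoc]

lemma innerL_mplusL (x : P) (f g : P → ℝ) :
    W.innerL x 0 f (W.MplusL x g) = W.innerL x 1 (W.UpL x f) (W.UpL x g) :=
  W.innerL_downL x 0 f (W.UpL x g)

lemma innerL_comm (x : P) (j : ℤ) (f g : P → ℝ) : W.innerL x j f g = W.innerL x j g f :=
  sum_congr rfl fun _ _ ↦ mul_right_comm _ _ _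

lemma innerL_mminusL (x : P) (f g : P → ℝ) :
    W.innerL x 0 f (W.MminusL x g) = W.Down f x * W.Down g x := by
  rw [innerL_comm, MminusL, ← neg_add_cancel (1 : ℤ), ← innerL_downL, innerL_neg_one,
    W.downL_eq_down le_rfl, W.downL_eq_down le_rfl, mul_comm]

lemma mminusL_eq_down {x y : P} (hxy : x ⋖ y) (g : P → ℝ) : W.MminusL x g y = W.Down g x := by
  refine W.upL_eq_of_forall_eq hxy.lt fun w hxw hwy ↦ ?_
  have hwx : w = x := (hxy.eq_or_eq hxw hwy.le).resolve_right hwy.ne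
  rw [hwx, W.downL_eq_down le_rfl]

lemma mplusL_mminusL {x y : P} (hxy : x ⋖ y) (hy : W.rk y < W.d) (g : P → ℝ) :
    W.MplusL x (W.MminusL x g) y = W.MminusL x g y := by
  rw [MplusL, W.downL_eq_down hxy.le, W.mminusL_eq_down hxy]
  refine W.down_eq_of_forall_eq hy fun z hyz ↦
    W.upL_eq_of_forall_eq (hxy.lt.trans hyz.lt) fun w hxw hwz ↦ W.mminusL_eq_down ?_ g
  refine W.covBy_of_le_of_rk_eq hxw ?_
  have := W.rk_covBy x y hxy
  have := W.rk_covBy y z hyz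
  have := W.rk_covBy w z hwz
  omega

lemma mplusL_sub_const_mul (x : P) (g h : P → ℝ) (β : ℝ) :
    W.MplusL x (fun y ↦ g y - β * h y) = W.MplusL x g - β • W.MplusL x h := by
  change W.MplusL x (g - β • h) = _
  simp only [MplusL, UpL, DownL, Matrix.mulVec_sub, Matrix.mulVec_smul]

lemma innerL_mplusL_sub_mul_sub_mminusL {x : P} (hx : W.rk x + 1 < W.d) (α β : ℝ)
    (f g : P → ℝ) :
    W.innerL x 0 f (fun y ↦
        W.MplusL x (fun w ↦ g w - β * W.MminusL x g w) y - α * (g y - β * W.MminusL x g y)) =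
      W.innerL x 1 (W.UpL x f) (W.UpL x g) - α * W.innerL x 0 f g
        - β * (1 - α) * (W.Down f x * W.Down g x) := by
  rw [← innerL_mplusL, ← innerL_mminusL]
  simp only [innerL, mul_sum, ← sum_sub_distrib]
  refine sum_congr rfl fun y hy ↦ ?_
  obtain ⟨hxy, hrk⟩ : x ≤ y ∧ W.rk y = W.rk x + 1 := by simpa [linkLvl] using hy
  rw [mplusL_sub_const_mul, Pi.sub_apply, Pi.smul_apply, smul_eq_mul,
    W.mplusL_mminusL (W.covBy_of_le_of_rk_eq hxy hrk) (by rwa [hrk])]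
  ring

end Links

section Overlap

/-- The chain overlap of `y` and `w` below `z` at level `i`: the kernel of the quadratic form
`Σ_{x ∈ P(i)} m(x) ⟨U_x f_x, U_x g_x⟩_x`. For `i = rk z - 2` these are the sums that Property UL
prescribes. -/
def chainOverlap (i : ℤ) (y w z : P) : ℝ :=
  ∑ x ∈ W.lvl i, W.chSum x y * W.chSum x w / W.chSum x z

lemma sum_lvl_m_mul_innerL_upL (i j : ℤ) (f g : P → ℝ) :
    ∑ x ∈ W.lvl i, W.m x * W.innerL x j (W.UpL x f) (W.UpL x g) =
      ∑ z ∈ W.lvl (i + 1 + j), W.m z *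
        ∑ y, ∑ w, W.p z y * f y * (W.p z w * g w) * W.chainOverlap i y w z := by
  have summand (x z : P) : W.chSum x z * (W.m z * W.UpL x f z * W.UpL x g z) =
      W.m z * ∑ y, ∑ w, W.p z y * f y * (W.p z w * g w) *
        (W.chSum x y * W.chSum x w / W.chSum x z) := by
    calc W.chSum x z * (W.m z * W.UpL x f z * W.UpL x g z)
        = W.m z * ((W.chSum x z * W.UpL x f z) * (W.chSum x z * W.UpL x g z) /
            W.chSum x z) := by
          by_cases h : W.chSum x z = 0
          · simp [h]
          · field_simp
      _ = _ := by
          rw [chSum_mul_upL, chSum_mul_upL, sum_mul_sum, sum_div]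
          simp only [sum_div]
          exact congrArg _ (sum_congr rfl fun y _ ↦ sum_congr rfl fun w _ ↦ by ring)
  calc ∑ x ∈ W.lvl i, W.m x * W.innerL x j (W.UpL x f) (W.UpL x g)
      = ∑ x ∈ W.lvl i, ∑ z ∈ W.lvl (i + 1 + j), W.m z *
          ∑ y, ∑ w, W.p z y * f y * (W.p z w * g w) *
            (W.chSum x y * W.chSum x w / W.chSum x z) :=
        sum_congr rfl fun x hx ↦ by simp only [m_mul_innerL, mem_lvl.1 hx, summand]
    _ = _ := by
        rw [sum_comm]
        refine sum_congr rfl fun z _ ↦ ?_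
        rw [← mul_sum, sum_comm]
        congr! 2 with y
        rw [sum_comm]
        simp only [chainOverlap, mul_sum]

variable {W} {cxyz cdia csqr : ℤ → ℝ} {l : ℤ}

lemma chainOverlap_of_rk_eq {y w : P} (hy : W.rk y = l) (hw : W.rk w = l) (z : P) :
    W.chainOverlap (l - 1) y w z =
      ∑ x ∈ univ.filter (fun x ↦ x ⋖ y ∧ x ⋖ w), W.p y x * W.p w x / W.chSum x z := by
  have hsub : univ.filter (fun x ↦ x ⋖ y ∧ x ⋖ w) ⊆ W.lvl (l - 1) := fun x hx ↦ by
    have := W.rk_covBy x y (mem_filter.1 hx).2.1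
    exact mem_lvl.2 (by omega)
  have hp (x : P) (hx : x ∈ W.lvl (l - 1)) : W.chSum x y * W.chSum x w / W.chSum x z =
      W.p y x * W.p w x / W.chSum x z := by
    rw [mem_lvl] at hx
    rw [W.chSum_of_rk_eq_add_one (by omega), W.chSum_of_rk_eq_add_one (by omega)]
  rw [chainOverlap, sum_congr rfl hp]
  refine (sum_subset hsub fun x _ hx ↦ ?_).symm
  simp only [mem_filter, mem_univ, true_and, not_and_or] at hx
  rcases hx with hx | hx <;> simp [W.p_eq_zero_of_not_covBy hx]

lemma UL1.chainOverlap_self (h1 : W.UL1 cxyz) (hl0 : 0 ≤ l) (hld : l < W.d) {y z : P}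
    (hy : W.rk y = l) (hyz : y ⋖ z) : W.chainOverlap (l - 1) y y z = cxyz l := by
  simp only [chainOverlap_of_rk_eq hy hy, and_self, ← sq]
  exact h1 l hl0 hld y hy z hyz

lemma UL2.chainOverlap_of_ne (h2 : W.UL2 cdia) (hl0 : 0 ≤ l) (hld : l < W.d) {y w z : P}
    (hy : W.rk y = l) (hne : y ≠ w) (hyz : y ⋖ z) (hwz : w ⋖ z) :
    W.chainOverlap (l - 1) y w z = cdia l := by
  have hw : W.rk w = l := by
    have := W.rk_covBy y z hyz
    have := W.rk_covBy w z hwz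
    omega
  rw [chainOverlap_of_rk_eq hy hw]
  exact h2 l hl0 hld y w hy hw hne z hyz hwz

lemma UL3.sum_lvl_m_mul_sum_p_sq (h3 : W.UL3 csqr) (hl0 : 0 ≤ l) (hld : l < W.d)
    (F : P → ℝ) :
    ∑ z ∈ W.lvl (l + 1), W.m z * ∑ y, W.p z y ^ 2 * F y =
      csqr l * ∑ y ∈ W.lvl l, W.m y * F y := by
  calc ∑ z ∈ W.lvl (l + 1), W.m z * ∑ y, W.p z y ^ 2 * F y
      = ∑ z ∈ W.lvl (l + 1), ∑ y, W.p z y * (W.p z y * (W.m z * F y)) := by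
        simp only [mul_sum]
        congr! 2
        ring
    _ = ∑ y ∈ W.lvl l, ∑ z, W.p z y * (W.p z y * (W.m z * F y)) :=
        (W.sum_lvl_sum_p_comm l _).symm
    _ = ∑ y ∈ W.lvl l, csqr l * W.m y * F y := by
        refine sum_congr rfl fun y hy ↦ ?_
        rw [← h3 l hl0 hld y (mem_lvl.1 hy), sum_mul]
        refine (sum_subset_zero_on_sdiff (subset_univ _) (fun z hz ↦ ?_) fun z _ ↦ ?_).symm
        · rw [W.p_eq_zero_of_not_covBy (by simpa using hz), zero_mul]
        · ring
    _ = csqr l * ∑ y ∈ W.lvl l, W.m y * F y := by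
        simp only [mul_sum, mul_assoc]

lemma sum_sum_mul_chainOverlap (h1 : W.UL1 cxyz) (h2 : W.UL2 cdia) (hl0 : 0 ≤ l)
    (hld : l < W.d) {z : P} (hz : W.rk z = l + 1) (f g : P → ℝ) :
    ∑ y, ∑ w, W.p z y * f y * (W.p z w * g w) * W.chainOverlap (l - 1) y w z =
      cdia l * (W.Up f z * W.Up g z)
        + (cxyz l - cdia l) * ∑ y, W.p z y ^ 2 * (f y * g y) := by
  have summand (y w : P) :
      W.p z y * f y * (W.p z w * g w) * W.chainOverlap (l - 1) y w z =
        cdia l * (W.p z y * f y * (W.p z w * g w))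
          + if y = w then (cxyz l - cdia l) * (W.p z y ^ 2 * (f y * g y)) else 0 := by
    by_cases hyz : y ⋖ z
    · have hy : W.rk y = l := by
        have := W.rk_covBy y z hyz
        omega
      by_cases hwz : w ⋖ z
      · split_ifs with hyw
        · subst hyw
          rw [h1.chainOverlap_self hl0 hld hy hyz]
          ring
        · rw [h2.chainOverlap_of_ne hl0 hld hy hyw hyz hwz]
          ring
      · have hyw : y ≠ w := by rintro rfl; exact hwz hyz
        simp [hyw, W.p_eq_zero_of_not_covBy hwz]
    · simp [W.p_eq_zero_of_not_covBy hyz]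
  simp only [summand, sum_add_distrib, sum_ite_eq, mem_univ, if_true, ← mul_sum, up_apply,
    sum_mul_sum]

lemma sum_lvl_m_mul_innerL_upL_of_UL (h1 : W.UL1 cxyz) (h2 : W.UL2 cdia) (h3 : W.UL3 csqr)
    (hl0 : 0 ≤ l) (hld : l < W.d) (f g : P → ℝ) :
    ∑ x ∈ W.lvl (l - 1), W.m x * W.innerL x 1 (W.UpL x f) (W.UpL x g) =
      cdia l * W.innerAt (l + 1) (W.Up f) (W.Up g)
        + csqr l * (cxyz l - cdia l) * W.innerAt l f g := by
  have hform : ∀ z ∈ W.lvl (l + 1),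
      W.m z * ∑ y, ∑ w, W.p z y * f y * (W.p z w * g w) * W.chainOverlap (l - 1) y w z =
        cdia l * (W.m z * W.Up f z * W.Up g z)
          + (cxyz l - cdia l) * (W.m z * ∑ y, W.p z y ^ 2 * (f y * g y)) := by
    intro z hz
    rw [sum_sum_mul_chainOverlap h1 h2 hl0 hld (mem_lvl.1 hz)]
    ring
  rw [sum_lvl_m_mul_innerL_upL, sub_add_cancel, sum_congr rfl hform, sum_add_distrib, ← mul_sum,
    ← mul_sum, h3.sum_lvl_m_mul_sum_p_sq hl0 hld]
  simp only [innerAt, mul_assoc]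
  ring

end Overlap

end WGP

/-- the two-parameter decomposition identity under Property UL. -/
theorem stmt6 {P : Type} [Fintype P] [PartialOrder P] (W : WGP P)
    (cxyz cdia csqr : ℤ → ℝ)
    (h1 : W.UL1 cxyz) (h2 : W.UL2 cdia) (h3 : W.UL3 csqr)
    (hdia : ∀ l : ℤ, 0 ≤ l → l ≤ W.d - 1 → 0 < cdia l)
    (α β : ℝ) (l : ℤ) (hl0 : 0 ≤ l) (hld : l ≤ W.d - 1) (f g : P → ℝ) :
    cdia l * W.innerAt (l + 1) (W.Up f) (W.Up g)
      = β * (1 - α) * W.innerAt (l - 1) (W.Down f) (W.Down g)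
        + (α - csqr l * (cxyz l - cdia l)) * W.innerAt l f g
        + ∑ x ∈ W.lvl (l - 1), W.m x *
            W.innerL x 0 f (fun y =>
              W.MplusL x (fun w => g w - β * W.MminusL x g w) y
                - α * (g y - β * W.MminusL x g y)) := by
  have hld' : l < W.d := Int.lt_of_le_sub_one hld
  have expand : ∀ x ∈ W.lvl (l - 1), W.m x *
      W.innerL x 0 f (fun y =>
        W.MplusL x (fun w => g w - β * W.MminusL x g w) y - α * (g y - β * W.MminusL x g y)) =
      W.m x * W.innerL x 1 (W.UpL x f) (W.UpL x g) - α * (W.m x * W.innerL x 0 f g)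
        - β * (1 - α) * (W.m x * W.Down f x * W.Down g x) := by
    intro x hx
    have hrk : W.rk x + 1 < W.d := by rwa [WGP.mem_lvl.1 hx, sub_add_cancel]
    rw [W.innerL_mplusL_sub_mul_sub_mminusL hrk]
    ring
  rw [sum_congr rfl expand, sum_sub_distrib, sum_sub_distrib, ← mul_sum, ← mul_sum,
    WGP.sum_lvl_m_mul_innerL_upL_of_UL h1 h2 h3 hl0 hld',
    W.sum_lvl_m_mul_innerL (by omega) (by norm_num), sub_add_cancel, add_zero,
    ← WGP.innerAt]
  ring
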